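/- Let F be a face of the Gelfand–Cetlin polytope P_λ, where λ has block structure k. Then φ(F) is a face of the ladder diagram Γ_k: it is a subgraph of Γ_k containing all terminal vertices which equals a union of positive paths. -/

import Mathlib

open Classical

noncomputable section

/-- Partial sums of the (0-indexed) sequence `k`: `nseq k i = k 0 + ⋯ + k (i-1)`;
so `nseq k i` is the paper's `n_i` for the sequence `(k_1, …, k_s) = (k 0, …, k (s-1))`. -/
def nseq (k : ℕ → ℕ) (i : ℕ) : ℕ := ∑ j ∈ Finset.range i, k j

/-- The set of terminal vertices `T_k = {(n_i, n - n_i) : 0 ≤ i ≤ s}` of the ladder diagram. -/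
def terminals (s : ℕ) (k : ℕ → ℕ) : Set (ℕ × ℕ) :=
  {v | ∃ i ≤ s, v = (nseq k i, nseq k s - nseq k i)}

/-- The vertex set of the ladder diagram `Γ_k`. -/
def ladderV (s : ℕ) (k : ℕ → ℕ) : Set (ℕ × ℕ) :=
  {v | ∃ t ∈ terminals s k, v.1 ≤ t.1 ∧ v.2 ≤ t.2}

/-- A unit grid step: one step to the right or one step up. -/
def gridStep (v w : ℕ × ℕ) : Prop :=
  w = (v.1 + 1, v.2) ∨ w = (v.1, v.2 + 1)

/-- The edge set of the ladder diagram `Γ_k`. -/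
def ladderE (s : ℕ) (k : ℕ → ℕ) : Set ((ℕ × ℕ) × (ℕ × ℕ)) :=
  {e | e.1 ∈ ladderV s k ∧ e.2 ∈ ladderV s k ∧ gridStep e.1 e.2}

/-- A combinatorial (directed) graph in the grid `ℤ_{≥0} × ℤ_{≥0}`,
given by a set of vertices and a set of edges. -/
@[ext] structure LGraph where
  V : Set (ℕ × ℕ)
  E : Set ((ℕ × ℕ) × (ℕ × ℕ))

/-- Subgraph inclusion order on grid graphs. -/
instance : PartialOrder LGraph where
  le γ γ' := γ.V ⊆ γ'.V ∧ γ.E ⊆ γ'.E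
  le_refl γ := ⟨subset_rfl, subset_rfl⟩
  le_trans a b c h h' := ⟨h.1.trans h'.1, h.2.trans h'.2⟩
  le_antisymm a b h h' := LGraph.ext (subset_antisymm h.1 h'.1) (subset_antisymm h.2 h'.2)

/-- The ladder diagram `Γ_k` as a grid graph. -/
def ladder (s : ℕ) (k : ℕ → ℕ) : LGraph :=
  ⟨ladderV s k, ladderE s k⟩

/-- A positive path: (the graph of) a shortest path in the ladder diagram `Γ_k`
from the origin `(0,0)` to a terminal vertex. -/
def IsPositivePath (s : ℕ) (k : ℕ → ℕ) (p : LGraph) : Prop :=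
  ∃ (m : ℕ) (f : ℕ → ℕ × ℕ),
    f 0 = (0, 0) ∧ f m ∈ terminals s k ∧
    (∀ i < m, gridStep (f i) (f (i + 1))) ∧
    (∀ i ≤ m, f i ∈ ladderV s k) ∧
    p.V = {v | ∃ i ≤ m, v = f i} ∧
    p.E = {e | ∃ i < m, e = (f i, f (i + 1))}

/-- A face of the ladder diagram `Γ_k`: a subgraph which contains all terminal
vertices and is a union of positive paths. -/
def IsLadderFace (s : ℕ) (k : ℕ → ℕ) (γ : LGraph) : Prop :=
  terminals s k ⊆ γ.V ∧
  ∃ P : Set LGraph, (∀ p ∈ P, IsPositivePath s k p) ∧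
    γ.V = ⋃ p ∈ P, LGraph.V p ∧ γ.E = ⋃ p ∈ P, LGraph.E p

/-- The dimension (first Betti number) of a face of a ladder diagram:
`|E(γ)| - |V(γ)| + 1`. -/
def ldim (γ : LGraph) : ℤ :=
  (γ.E.ncard : ℤ) - (γ.V.ncard : ℤ) + 1

/-- The index set `I = {(i,j) : i,j ≥ 1, i+j ≤ n}` of the coordinates of a
Gelfand–Cetlin pattern. -/
def GCIdx (n : ℕ) : Set (ℕ × ℕ) := {p | 1 ≤ p.1 ∧ 1 ≤ p.2 ∧ p.1 + p.2 ≤ n}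

/-- The entries of a Gelfand–Cetlin pattern `x`, extended by the boundary
condition `x_{i, n+1-i} = λ_i`. -/
def gcEntry (n : ℕ) (lam : ℕ → ℝ) (x : GCIdx n → ℝ) (p : ℕ × ℕ) : ℝ :=
  if h : p ∈ GCIdx n then x ⟨p, h⟩ else lam p.1

/-- The Gelfand–Cetlin polytope `P_λ`: the set of points `(x_{i,j})_{(i,j) ∈ I}`
with `x_{i,j+1} ≥ x_{i,j} ≥ x_{i+1,j}` for all `(i,j) ∈ I`, where
`x_{i,n+1-i} = λ_i`. -/
def GCPoly (n : ℕ) (lam : ℕ → ℝ) : Set (GCIdx n → ℝ) :=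
  {x | ∀ i j : ℕ, (i, j) ∈ GCIdx n →
    gcEntry n lam x (i, j) ≤ gcEntry n lam x (i, j + 1) ∧
    gcEntry n lam x (i + 1, j) ≤ gcEntry n lam x (i, j)}

/-- The subset of `P_λ` obtained by turning the inequalities
`x_{i,j+1} ≥ x_{i,j}` for `(i,j) ∈ SH` and `x_{i,j} ≥ x_{i+1,j}` for
`(i,j) ∈ SV` into equalities. -/
def GCFaceOf (n : ℕ) (lam : ℕ → ℝ) (SH SV : Set (ℕ × ℕ)) : Set (GCIdx n → ℝ) :=
  {x | x ∈ GCPoly n lam ∧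
    (∀ p ∈ SH, gcEntry n lam x (p.1, p.2 + 1) = gcEntry n lam x p) ∧
    (∀ p ∈ SV, gcEntry n lam x p = gcEntry n lam x (p.1 + 1, p.2))}

/-- A face of the GC polytope: a nonempty solution set of the system obtained
by replacing some of the defining inequalities by equalities. -/
def IsGCFace (n : ℕ) (lam : ℕ → ℝ) (F : Set (GCIdx n → ℝ)) : Prop :=
  F.Nonempty ∧ ∃ SH SV : Set (ℕ × ℕ), SH ⊆ GCIdx n ∧ SV ⊆ GCIdx n ∧
    F = GCFaceOf n lam SH SV

/-- The dimension of (a face of) the GC polytope: the dimension of its affine span. -/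
def GCdim (n : ℕ) (F : Set (GCIdx n → ℝ)) : ℕ :=
  Module.finrank ℝ (affineSpan ℝ F).direction

/-- `lam` (1-indexed) is weakly decreasing with block structure `k`: it is
constant on each block `(n_{i-1}, n_i]` and strictly decreases between
consecutive blocks. -/
def HasBlockStructure (s : ℕ) (k : ℕ → ℕ) (lam : ℕ → ℝ) : Prop :=
  (∀ i < s, ∀ a b : ℕ, nseq k i < a → a ≤ b → b ≤ nseq k (i + 1) → lam a = lam b) ∧
  (∀ i : ℕ, 1 ≤ i → i < s → lam (nseq k i + 1) < lam (nseq k i))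

/-- The edge set of the graph `φ(F)` associated to a subset `F` of the GC polytope. -/
def phiE (n : ℕ) (lam : ℕ → ℝ) (F : Set (GCIdx n → ℝ)) :
    Set ((ℕ × ℕ) × (ℕ × ℕ)) :=
  {e | (∃ i < n, e = ((0, i), (0, i + 1)) ∨ e = ((i, 0), (i + 1, 0))) ∨
    (∃ i j : ℕ, (i, j) ∈ GCIdx n ∧ e = ((i - 1, j), (i, j)) ∧
      ∃ x ∈ F, gcEntry n lam x (i, j) < gcEntry n lam x (i, j + 1)) ∨
    (∃ i j : ℕ, (i, j) ∈ GCIdx n ∧ e = ((i, j - 1), (i, j)) ∧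
      ∃ x ∈ F, gcEntry n lam x (i + 1, j) < gcEntry n lam x (i, j))}

/-- The graph `φ(F)`: its edges are given by `phiE` and its vertices are the
endpoints of its edges. -/
def phiGC (n : ℕ) (lam : ℕ → ℝ) (F : Set (GCIdx n → ℝ)) : LGraph where
  V := {v | ∃ e ∈ phiE n lam F, v = e.1 ∨ v = e.2}
  E := phiE n lam F

/-- The map `ψ`: for a subgraph `γ`, the set of points of `P_λ` where the
inequalities corresponding to the missing edges of `γ` become equalities. -/
def psiGC (n : ℕ) (lam : ℕ → ℝ) (γ : LGraph) : Set (GCIdx n → ℝ) :=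
  {x | x ∈ GCPoly n lam ∧ ∀ i j : ℕ, (i, j) ∈ GCIdx n →
    (((i - 1, j), (i, j)) ∉ γ.E → gcEntry n lam x (i, j) = gcEntry n lam x (i, j + 1)) ∧
    (((i, j - 1), (i, j)) ∉ γ.E → gcEntry n lam x (i, j) = gcEntry n lam x (i + 1, j))}
/-- The recursively defined point `x̄` of the proof of Lemma 2.6 (bijectivity):
`x̄_{i,j} = λ_i` if `i + j = n + 1`, and for `i + j ≤ n` it is determined from
`x̄_{i,j+1}` and `x̄_{i+1,j}` according to which of the two edges
`((i-1,j),(i,j))`, `((i,j-1),(i,j))` belong to `E`. -/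
def barX (n : ℕ) (lam : ℕ → ℝ) (E : Set ((ℕ × ℕ) × (ℕ × ℕ))) : ℕ → ℕ → ℝ
  | i, j =>
    if h1 : n + 1 ≤ i + j then lam i
    else if h2 : ((i - 1, j), (i, j)) ∈ E then
      if h3 : ((i, j - 1), (i, j)) ∈ E then
        (barX n lam E i (j + 1) + barX n lam E (i + 1) j) / 2
      else barX n lam E (i + 1) j
    else barX n lam E i (j + 1)
  termination_by i j => n + 1 - (i + j)
  decreasing_by all_goals omega

/-- `α, β : ℕ → ℕ` encode an element
`w = ((α_1,β_1),…,(α_{s-1},β_{s-1})) ∈ W_{s-1}`, with the conventions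
`α_0 = 0`, `β_0 = 1`, `α_s = 1`, `β_s = 0`. -/
def IsW (s : ℕ) (α β : ℕ → ℕ) : Prop :=
  (∀ i : ℕ, 1 ≤ i → i < s →
    (α i, β i) = (1, 0) ∨ (α i, β i) = (0, 1) ∨ (α i, β i) = (1, 1)) ∧
  α 0 = 0 ∧ β 0 = 1 ∧ α s = 1 ∧ β s = 0

/-- The edge set of the subgraph `g_w` of `Γ_k`: the horizontal edge into the
terminal vertex `v_i` when `α_i = 1` and the vertical edge into `v_i` when
`β_i = 1`. -/
def gwE (s : ℕ) (k α β : ℕ → ℕ) : Set ((ℕ × ℕ) × (ℕ × ℕ)) :=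
  {e | ∃ i ≤ s,
    (α i = 1 ∧
      e = ((nseq k i - 1, nseq k s - nseq k i), (nseq k i, nseq k s - nseq k i))) ∨
    (β i = 1 ∧
      e = ((nseq k i, nseq k s - nseq k i - 1), (nseq k i, nseq k s - nseq k i)))}

/-- The subgraph `g_w` of `Γ_k`. -/
def gwGraph (s : ℕ) (k α β : ℕ → ℕ) : LGraph where
  V := {v | ∃ e ∈ gwE s k α β, v = e.1 ∨ v = e.2}
  E := gwE s k α β

/-- The interleaved sequence `r_w(k) * w̃` of length `2s - 1` (0-indexed):
entry `2j` is `k''_{j+1} = k_{j+1} + 1 - α_{j+1} - β_j` and entry `2j + 1` is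
`w̃_{j+1} = α_{j+1} β_{j+1}`. -/
def rstar (s : ℕ) (k α β : ℕ → ℕ) (t : ℕ) : ℕ :=
  if t % 2 = 0 then k (t / 2) + 1 - α (t / 2 + 1) - β (t / 2)
  else α (t / 2 + 1) * β (t / 2 + 1)

/-- `α`-value of one of the three symbols `(1,0), (0,1), (1,1)`,
encoded as `0, 1, 2 : Fin 3` respectively. -/
def aW3 (c : Fin 3) : ℕ := if c = 1 then 0 else 1

/-- `β`-value of one of the three symbols `(1,0), (0,1), (1,1)`,
encoded as `0, 1, 2 : Fin 3` respectively. -/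
def bW3 (c : Fin 3) : ℕ := if c = 0 then 0 else 1

/-- The function `α` of the element of `W_{s-1}` encoded by
`c : Fin (s-1) → Fin 3` (with the conventions `α_0 = 0`, `α_s = 1`). -/
def alph (s : ℕ) (c : Fin (s - 1) → Fin 3) (i : ℕ) : ℕ :=
  if i = 0 then 0 else if h : i - 1 < s - 1 then aW3 (c ⟨i - 1, h⟩) else 1

/-- The function `β` of the element of `W_{s-1}` encoded by
`c : Fin (s-1) → Fin 3` (with the conventions `β_0 = 1`, `β_s = 0`). -/
def bet (s : ℕ) (c : Fin (s - 1) → Fin 3) (i : ℕ) : ℕ :=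
  if i = 0 then 1 else if h : i - 1 < s - 1 then bW3 (c ⟨i - 1, h⟩) else 0

/-- The interleaved sequence `r_w(k) * w̃` (of length `2s - 1`, 0-indexed) for
the element `w ∈ W_{s-1}` encoded by `c`. -/
def newk (s : ℕ) (c : Fin (s - 1) → Fin 3) (k : ℕ → ℕ) (t : ℕ) : ℕ :=
  if t % 2 = 0 then k (t / 2) + 1 - alph s c (t / 2 + 1) - bet s c (t / 2)
  else alph s c (t / 2 + 1) * bet s c (t / 2 + 1)

/-- `|w| = Σ_{i=1}^{s-1} α_i β_i` for the element `w ∈ W_{s-1}` encoded by `c`. -/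
def wsize (s : ℕ) (c : Fin (s - 1) → Fin 3) : ℕ :=
  ∑ j ∈ Finset.range (s - 1), alph s c (j + 1) * bet s c (j + 1)

/-- The subgraph `g_w` of `Γ_k` for the element `w ∈ W_{s-1}` encoded by `c`. -/
def gwGraph3 (s : ℕ) (k : ℕ → ℕ) (c : Fin (s - 1) → Fin 3) : LGraph :=
  gwGraph s k (alph s c) (bet s c)

/-- Union of two grid graphs (union of vertex sets and of edge sets). -/
def ugraph (γ δ : LGraph) : LGraph := ⟨γ.V ∪ δ.V, γ.E ∪ δ.E⟩

/-- The generating function `F_k(t) = Σ_{γ face of Γ_k} t^{dim γ}` of the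
`f`-vector of the ladder diagram `Γ_k`, as a formal power series in `t`:
the coefficient of `t^d` is the number of faces of `Γ_k` of dimension `d`. -/
def fpol (s : ℕ) (k : ℕ → ℕ) : PowerSeries ℤ :=
  PowerSeries.mk fun d =>
    (Set.ncard {γ : LGraph | IsLadderFace s k γ ∧ ldim γ = (d : ℤ)} : ℤ)

/-- The operator `Π_{i=1}^{s-1} (∂/∂x_i + ∂/∂x_{i+1} + t ∂/∂y_i)` applied to a
polynomial in the variables `x_1, x_2, … , y_1, y_2, …` (the variable `x_{i+1}`
is `Sum.inl i` and `y_{i+1}` is `Sum.inr i`) over `ℚ[t]`. -/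
def Lfold (s : ℕ) (f : MvPolynomial (ℕ ⊕ ℕ) (Polynomial ℚ)) :
    MvPolynomial (ℕ ⊕ ℕ) (Polynomial ℚ) :=
  (List.range (s - 1)).foldl
    (fun g i =>
      MvPolynomial.pderiv (Sum.inl i) g + MvPolynomial.pderiv (Sum.inl (i + 1)) g +
        (Polynomial.X : Polynomial ℚ) • MvPolynomial.pderiv (Sum.inr i) g) f

/-- The operator `D_w = Π_{i=1}^{s-1} (∂/∂x_i)^{1-α_i} (∂/∂x_{i+1})^{1-β_i}
(t ∂/∂y_i)^{α_i β_i}` for the element `w ∈ W_{s-1}` encoded by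
`c : Fin (s-1) → Fin 3` (`0 ↦ (1,0)`, `1 ↦ (0,1)`, `2 ↦ (1,1)`). -/
def DfoldC (s : ℕ) (c : Fin (s - 1) → Fin 3)
    (f : MvPolynomial (ℕ ⊕ ℕ) (Polynomial ℚ)) : MvPolynomial (ℕ ⊕ ℕ) (Polynomial ℚ) :=
  (List.finRange (s - 1)).foldl
    (fun g i =>
      if c i = 0 then MvPolynomial.pderiv (Sum.inl ((i : ℕ) + 1)) g
      else if c i = 1 then MvPolynomial.pderiv (Sum.inl (i : ℕ)) g
      else (Polynomial.X : Polynomial ℚ) • MvPolynomial.pderiv (Sum.inr (i : ℕ)) g) f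

/-- The operator `D_w` for the element `w ∈ W_{s-1}` encoded by `α, β : ℕ → ℕ`. -/
def DfoldW (s : ℕ) (α β : ℕ → ℕ)
    (f : MvPolynomial (ℕ ⊕ ℕ) (Polynomial ℚ)) : MvPolynomial (ℕ ⊕ ℕ) (Polynomial ℚ) :=
  (List.range (s - 1)).foldl
    (fun g j =>
      if α (j + 1) = 1 ∧ β (j + 1) = 1 then
        (Polynomial.X : Polynomial ℚ) • MvPolynomial.pderiv (Sum.inr j) g
      else if α (j + 1) = 1 then MvPolynomial.pderiv (Sum.inl (j + 1)) g
      else MvPolynomial.pderiv (Sum.inl j) g) f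

/-- Substitution of `0` for all the variables `y_j = Sum.inr j`. -/
def setYzero :
    MvPolynomial (ℕ ⊕ ℕ) (Polynomial ℚ) →ₐ[Polynomial ℚ] MvPolynomial (ℕ ⊕ ℕ) (Polynomial ℚ) :=
  MvPolynomial.aeval
    (Sum.elim (fun i => MvPolynomial.X (Sum.inl i)) fun _ => (0 : MvPolynomial (ℕ ⊕ ℕ) (Polynomial ℚ)))
end

theorem aux_backward (E : Set ((ℕ × ℕ) × (ℕ × ℕ)))
    (hstep : ∀ e ∈ E, gridStep e.1 e.2)
    (hin : ∀ e ∈ E, e.1 ≠ (0, 0) → ∃ u, (u, e.1) ∈ E) :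
    ∀ d : ℕ, ∀ e ∈ E, e.1.1 + e.1.2 = d → ∃ (m : ℕ) (f : ℕ → ℕ × ℕ),
      f 0 = (0, 0) ∧ (f m, f (m + 1)) = e ∧ ∀ i ≤ m, (f i, f (i + 1)) ∈ E := by
  intro d
  induction d with
  | zero =>
    rintro ⟨⟨a, b⟩, w⟩ he hd
    simp only at hd
    obtain ⟨rfl, rfl⟩ : a = 0 ∧ b = 0 := by omega
    refine ⟨0, fun t => if t = 0 then (0, 0) else w, by simp, by simp, ?_⟩
    intro i hi
    obtain rfl : i = 0 := by omega
    simpa using he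
  | succ d ih =>
    intro e he hd
    have hne : e.1 ≠ (0, 0) := by
      intro h
      rw [h] at hd
      simp at hd
    obtain ⟨u, hu⟩ := hin e he hne
    have hud : u.1 + u.2 = d := by
      rcases hstep _ hu with h | h <;> simp only at h <;> rw [h] at hd <;> simp only at hd <;> omega
    obtain ⟨m, f, h0, hm, hE⟩ := ih (u, e.1) hu hud
    have hm2 : f (m + 1) = e.1 := congrArg Prod.snd hm
    refine ⟨m + 1, fun t => if t ≤ m + 1 then f t else e.2, by simpa using h0, ?_, ?_⟩
    · simp [hm2]
    · intro i hi
      rcases Nat.lt_or_ge m i with h | h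
      · obtain rfl : i = m + 1 := by omega
        simpa [hm2] using he
      · have h1 : i ≤ m + 1 := hi
        simpa [h, h1] using hE i h

theorem aux_forward (E : Set ((ℕ × ℕ) × (ℕ × ℕ))) (T : Set (ℕ × ℕ)) (n : ℕ)
    (hstep : ∀ e ∈ E, gridStep e.1 e.2)
    (hn : ∀ e ∈ E, e.2.1 + e.2.2 ≤ n)
    (hout : ∀ e ∈ E, e.2 ∉ T → ∃ w, (e.2, w) ∈ E) :
    ∀ (r m : ℕ) (f : ℕ → ℕ × ℕ), (∀ i ≤ m, (f i, f (i + 1)) ∈ E) →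
      n - ((f (m + 1)).1 + (f (m + 1)).2) = r →
      ∃ (M : ℕ) (g : ℕ → ℕ × ℕ), m ≤ M ∧ (∀ t ≤ m + 1, g t = f t) ∧
        (∀ i ≤ M, (g i, g (i + 1)) ∈ E) ∧ g (M + 1) ∈ T := by
  intro r
  induction r with
  | zero =>
    intro m f hE hr
    by_cases hT : f (m + 1) ∈ T
    · exact ⟨m, f, le_rfl, fun _ _ => rfl, hE, hT⟩
    · exfalso
      obtain ⟨w, hw⟩ := hout _ (hE m le_rfl) hT
      have h1 := hn _ hw
      simp only at hw h1
      rcases hstep _ hw with h | h <;> simp only at h <;> rw [h] at h1 <;> simp only at h1 <;> omega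
  | succ r ih =>
    intro m f hE hr
    by_cases hT : f (m + 1) ∈ T
    · exact ⟨m, f, le_rfl, fun _ _ => rfl, hE, hT⟩
    · obtain ⟨w, hw⟩ := hout _ (hE m le_rfl) hT
      simp only at hw
      obtain ⟨M, g, hM, hg, hgE, hgT⟩ := ih (m + 1) (fun t => if t ≤ m + 1 then f t else w) (by
          intro i hi
          rcases Nat.lt_or_ge m i with h | h
          · obtain rfl : i = m + 1 := by omega
            simpa using hw
          · have h1 : i ≤ m + 1 := hi
            simpa [h, h1] using hE i h) (by
          simp only [show ¬ (m + 1 + 1 ≤ m + 1) by omega, if_false]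
          rcases hstep _ hw with h | h <;> simp only at h <;> rw [h] <;> simp only <;> omega)
      refine ⟨M, g, by omega, ?_, hgE, hgT⟩
      intro t ht
      rw [hg t (by omega)]
      simp [ht]

theorem aux_nseq_mono (k : ℕ → ℕ) {i j : ℕ} (h : i ≤ j) : nseq k i ≤ nseq k j :=
  Finset.sum_le_sum_of_subset (Finset.range_mono h)

theorem aux_nseq_succ (k : ℕ → ℕ) (i : ℕ) : nseq k (i + 1) = nseq k i + k i :=
  Finset.sum_range_succ _ _

/-- Abstract criterion for being a face of the ladder diagram. -/
theorem aux_face (s : ℕ) (k : ℕ → ℕ) (E : Set ((ℕ × ℕ) × (ℕ × ℕ))) (n : ℕ)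
    (hstep : ∀ e ∈ E, gridStep e.1 e.2)
    (hn : ∀ e ∈ E, e.2.1 + e.2.2 ≤ n)
    (hin : ∀ e ∈ E, e.1 ≠ (0, 0) → ∃ u, (u, e.1) ∈ E)
    (hout : ∀ e ∈ E, e.2 ∉ terminals s k → ∃ w, (e.2, w) ∈ E)
    (hT : ∀ t ∈ terminals s k, ∃ e ∈ E, t = e.1 ∨ t = e.2) :
    IsLadderFace s k ⟨{v | ∃ e ∈ E, v = e.1 ∨ v = e.2}, E⟩ := by
  have key : ∀ e ∈ E, ∃ p : LGraph, IsPositivePath s k p ∧ e ∈ p.E ∧ e.1 ∈ p.V ∧ e.2 ∈ p.V ∧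
      p.E ⊆ E ∧ p.V ⊆ {v | ∃ e ∈ E, v = e.1 ∨ v = e.2} := by
    intro e he
    obtain ⟨m, f, h0, hm, hE⟩ := aux_backward E hstep hin _ e he rfl
    obtain ⟨M, g, hM, hg, hgE, hgT⟩ := aux_forward E _ n hstep hn hout _ m f hE rfl
    have hge : e = (g m, g (m + 1)) := by rw [hg m (by omega), hg (m + 1) le_rfl, hm]
    refine ⟨⟨{v | ∃ i ≤ M + 1, v = g i}, {e | ∃ i < M + 1, e = (g i, g (i + 1))}⟩, ?_, ?_, ?_, ?_,
      ?_, ?_⟩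
    · have hs' : ∀ i < M + 1, gridStep (g i) (g (i + 1)) := fun i hi =>
        hstep _ (hgE i (by omega))
      refine ⟨M + 1, g, by rw [hg 0 (by omega), h0], hgT, hs', ?_, rfl, rfl⟩
      intro i hi
      refine ⟨_, hgT, ?_⟩
      induction hi using Nat.decreasingInduction with
      | self => exact ⟨le_rfl, le_rfl⟩
      | of_succ i hi ih =>
        rcases hs' i hi with h | h <;> rw [h] at ih <;> simp only at ih <;> omega
    · exact ⟨m, by omega, hge⟩
    · exact ⟨m, by omega, by rw [hge]⟩
    · exact ⟨m + 1, by omega, by rw [hge]⟩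
    · rintro _ ⟨i, hi, rfl⟩
      exact hgE i (by omega)
    · rintro _ ⟨i, hi, rfl⟩
      rcases Nat.lt_or_ge M i with h | h
      · obtain rfl : i = M + 1 := by omega
        exact ⟨_, hgE M le_rfl, Or.inr rfl⟩
      · exact ⟨_, hgE i h, Or.inl rfl⟩
  haveI : Nonempty LGraph := ⟨⟨∅, ∅⟩⟩
  choose! p hp using key
  refine ⟨hT, p '' E, ?_, ?_, ?_⟩
  · rintro _ ⟨e, he, rfl⟩
    exact (hp e he).1
  · apply Set.Subset.antisymm
    · rintro v ⟨e, he, rfl | rfl⟩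
      · exact Set.mem_biUnion (Set.mem_image_of_mem p he) (hp e he).2.2.1
      · exact Set.mem_biUnion (Set.mem_image_of_mem p he) (hp e he).2.2.2.1
    · apply Set.iUnion₂_subset
      rintro _ ⟨e, he, rfl⟩
      exact (hp e he).2.2.2.2.2
  · apply Set.Subset.antisymm
    · intro e he
      exact Set.mem_biUnion (Set.mem_image_of_mem p he) (hp e he).2.1
    · apply Set.iUnion₂_subset
      rintro _ ⟨e, he, rfl⟩
      exact (hp e he).2.2.2.2.1

theorem aux_block (s : ℕ) (k : ℕ → ℕ) (lam : ℕ → ℝ) (hlam : HasBlockStructure s k lam)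
    (i : ℕ) (hi : i < nseq k s) (h : ∀ l ≤ s, nseq k l ≠ i) :
    lam i = lam (i + 1) := by
  have hex : ∃ l, i < nseq k l := ⟨s, hi⟩
  have h1 := Nat.find_spec hex
  have h2 : Nat.find hex ≤ s := Nat.find_min' hex hi
  obtain ⟨l, hl⟩ : ∃ l, Nat.find hex = l + 1 := by
    refine Nat.exists_eq_succ_of_ne_zero ?_
    intro h0
    rw [h0] at h1
    simp [nseq] at h1
  have h3 : ¬ i < nseq k l := Nat.find_min hex (by omega)
  rw [hl] at h1 h2
  have h4 := h l (by omega)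
  exact hlam.1 l (by omega) i (i + 1) (by omega) (by omega) (by omega)

/-- In an interior vertex, an entry pair that differs gives an incoming edge. -/
theorem aux_incoming (n : ℕ) (lam : ℕ → ℝ) (F : Set (GCIdx n → ℝ)) (x : GCIdx n → ℝ) (hx : x ∈ F)
    (i j : ℕ) (hij : (i, j) ∈ GCIdx n)
    (h : gcEntry n lam x (i + 1, j) < gcEntry n lam x (i, j + 1)) :
    ∃ u, (u, (i, j)) ∈ phiE n lam F := by
  by_cases h1 : gcEntry n lam x (i, j) < gcEntry n lam x (i, j + 1)
  · exact ⟨_, Or.inr (Or.inl ⟨i, j, hij, rfl, x, hx, h1⟩)⟩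
  · exact ⟨_, Or.inr (Or.inr ⟨i, j, hij, rfl, x, hx, lt_of_lt_of_le h (not_lt.mp h1)⟩)⟩

theorem aux_outgoing (n : ℕ) (lam : ℕ → ℝ) (F : Set (GCIdx n → ℝ)) (x : GCIdx n → ℝ) (hx : x ∈ F)
    (i j : ℕ) (hij : (i, j) ∈ GCIdx n) (hlt : i + j < n)
    (h : gcEntry n lam x (i + 1, j) < gcEntry n lam x (i, j + 1)) :
    ∃ w, ((i, j), w) ∈ phiE n lam F := by
  obtain ⟨ha, hb, -⟩ := hij
  simp only at ha hb
  by_cases h1 : gcEntry n lam x (i + 1, j) < gcEntry n lam x (i + 1, j + 1)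
  · exact ⟨(i + 1, j), Or.inr (Or.inl ⟨i + 1, j, ⟨by simp, hb, by simp only; omega⟩, rfl,
      x, hx, h1⟩)⟩
  · exact ⟨(i, j + 1), Or.inr (Or.inr ⟨i, j + 1, ⟨ha, by simp, by simp only; omega⟩, rfl,
      x, hx, lt_of_le_of_lt (not_lt.mp h1) h⟩)⟩

theorem aux_main (s : ℕ) (hs : 1 ≤ s) (k : ℕ → ℕ) (hk : ∀ i < s, 0 < k i)
    (lam : ℕ → ℝ) (hlam : HasBlockStructure s k lam) (n : ℕ) (hn : n = nseq k s)
    (F : Set (GCIdx n → ℝ)) (hF : IsGCFace n lam F) :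
    IsLadderFace s k (phiGC n lam F) := by
  obtain ⟨⟨x₀, hx₀⟩, SH, SV, -, -, hFeq⟩ := hF
  have hP : ∀ x ∈ F, x ∈ GCPoly n lam := by
    intro x hx
    rw [hFeq] at hx
    exact hx.1
  clear hFeq
  have hnpos : 0 < n := by
    have h1 := aux_nseq_mono k hs
    have h2 := aux_nseq_succ k 0
    have h3 := hk 0 (by omega)
    simp only [zero_add] at h2
    omega
  have hzero : nseq k 0 = 0 := by simp [nseq]
  have hbV : ∀ i < n, ((0, i), (0, i + 1)) ∈ phiE n lam F := fun i hi =>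
    Or.inl ⟨i, hi, Or.inl rfl⟩
  have hbH : ∀ i < n, ((i, 0), (i + 1, 0)) ∈ phiE n lam F := fun i hi =>
    Or.inl ⟨i, hi, Or.inr rfl⟩
  have T0 : (0, n) ∈ terminals s k := ⟨0, by omega, by simp [hzero, hn]⟩
  have Tn : (n, 0) ∈ terminals s k := ⟨s, le_rfl, by simp [hn]⟩
  -- an edge into an interior vertex
  have hEin : ∀ u i j, (u, (i, j)) ∈ phiE n lam F → 1 ≤ i → 1 ≤ j → (i, j) ∈ GCIdx n ∧
      ∃ x ∈ F, gcEntry n lam x (i + 1, j) < gcEntry n lam x (i, j + 1) := by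
    intro u i j he hi hj
    rcases he with ⟨a, ha, h | h⟩ | ⟨a, b, hab, h, x, hx, hlt⟩ | ⟨a, b, hab, h, x, hx, hlt⟩
    · simp only [Prod.mk.injEq] at h
      omega
    · simp only [Prod.mk.injEq] at h
      omega
    · simp only [Prod.mk.injEq] at h
      obtain ⟨-, rfl, rfl⟩ := h
      exact ⟨hab, x, hx, lt_of_le_of_lt (hP x hx _ _ hab).2 hlt⟩
    · simp only [Prod.mk.injEq] at h
      obtain ⟨-, rfl, rfl⟩ := h
      exact ⟨hab, x, hx, lt_of_lt_of_le hlt (hP x hx _ _ hab).1⟩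
  -- an edge out of an interior vertex
  have hEout : ∀ w i j, ((i, j), w) ∈ phiE n lam F → 1 ≤ i → 1 ≤ j → (i, j) ∈ GCIdx n ∧
      ∃ x ∈ F, gcEntry n lam x (i + 1, j) < gcEntry n lam x (i, j + 1) := by
    intro w i j he hi hj
    rcases he with ⟨a, ha, h | h⟩ | ⟨a, b, hab, h, x, hx, hlt⟩ | ⟨a, b, hab, h, x, hx, hlt⟩
    · simp only [Prod.mk.injEq] at h
      omega
    · simp only [Prod.mk.injEq] at h
      omega
    · simp only [Prod.mk.injEq] at h
      obtain ⟨⟨h1, rfl⟩, -⟩ := h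
      obtain rfl : a = i + 1 := by omega
      have hab' : i + 1 + j ≤ n := hab.2.2
      have hij : (i, j) ∈ GCIdx n := ⟨hi, hj, by simp only; omega⟩
      have hij2 : (i, j + 1) ∈ GCIdx n := ⟨hi, by simp, by simp only; omega⟩
      exact ⟨hij, x, hx, lt_of_lt_of_le hlt (hP x hx _ _ hij2).2⟩
    · simp only [Prod.mk.injEq] at h
      obtain ⟨⟨rfl, h1⟩, -⟩ := h
      obtain rfl : b = j + 1 := by omega
      have hab' : i + (j + 1) ≤ n := hab.2.2
      have hij : (i, j) ∈ GCIdx n := ⟨hi, hj, by simp only; omega⟩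
      have hij2 : (i + 1, j) ∈ GCIdx n := ⟨by simp, hj, by simp only; omega⟩
      exact ⟨hij, x, hx, lt_of_le_of_lt (hP x hx _ _ hij2).1 hlt⟩
  have hstep : ∀ e ∈ phiE n lam F, gridStep e.1 e.2 := by
    rintro e (⟨a, ha, rfl | rfl⟩ | ⟨a, b, hab, rfl, -⟩ | ⟨a, b, hab, rfl, -⟩)
    · exact Or.inr rfl
    · exact Or.inl rfl
    · have h1 : 1 ≤ a := hab.1
      exact Or.inl (by simp only; rw [Nat.sub_add_cancel h1])
    · have h1 : 1 ≤ b := hab.2.1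
      exact Or.inr (by simp only; rw [Nat.sub_add_cancel h1])
  have hle : ∀ e ∈ phiE n lam F, e.2.1 + e.2.2 ≤ n := by
    rintro e (⟨a, ha, rfl | rfl⟩ | ⟨a, b, hab, rfl, -⟩ | ⟨a, b, hab, rfl, -⟩)
    · simp only; omega
    · simp only; omega
    · exact hab.2.2
    · exact hab.2.2
  -- entries on the antidiagonal boundary
  have hbd : ∀ x i j, i + j = n → gcEntry n lam x (i + 1, j) = lam (i + 1) ∧
      gcEntry n lam x (i, j + 1) = lam i := by
    intro x i j hij
    constructor
    · exact dif_neg (fun h => by have h1 : i + 1 + j ≤ n := h.2.2; omega)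
    · exact dif_neg (fun h => by have h1 : i + (j + 1) ≤ n := h.2.2; omega)
  refine aux_face s k (phiE n lam F) n hstep hle ?_ ?_ ?_
  · rintro ⟨⟨i, j⟩, w⟩ he hne
    have hw := hle _ he
    have hst := hstep _ he
    have hlt : i + j < n := by
      rcases hst with h | h <;> simp only at h hw <;> rw [h] at hw <;> simp only at hw <;> omega
    rcases Nat.eq_zero_or_pos i with rfl | hi
    · rcases Nat.eq_zero_or_pos j with rfl | hj
      · exact absurd rfl hne
      · obtain ⟨j, rfl⟩ := Nat.exists_eq_succ_of_ne_zero hj.ne'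
        exact ⟨_, hbV j (by omega)⟩
    · rcases Nat.eq_zero_or_pos j with rfl | hj
      · obtain ⟨i, rfl⟩ := Nat.exists_eq_succ_of_ne_zero hi.ne'
        exact ⟨_, hbH i (by omega)⟩
      · obtain ⟨hij, x, hx, hxlt⟩ := hEout w i j he hi hj
        exact aux_incoming n lam F x hx i j hij hxlt
  · rintro ⟨u, ⟨i, j⟩⟩ he hnT
    have hw : i + j ≤ n := hle _ he
    simp only at hnT
    rcases Nat.eq_zero_or_pos i with rfl | hi
    · have : j ≠ n := by rintro rfl; exact hnT T0
      exact ⟨_, hbV j (by omega)⟩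
    · rcases Nat.eq_zero_or_pos j with rfl | hj
      · have : i ≠ n := by rintro rfl; exact hnT Tn
        exact ⟨_, hbH i (by omega)⟩
      · obtain ⟨hij, x, hx, hxlt⟩ := hEin u i j he hi hj
        rcases Nat.lt_or_ge (i + j) n with hlt | hge
        · exact aux_outgoing n lam F x hx i j hij hlt hxlt
        · exfalso
          have hsum : i + j = n := by omega
          obtain ⟨h1, h2⟩ := hbd x i j hsum
          rw [h1, h2] at hxlt
          have h3 := aux_block s k lam hlam i (by omega) (by
            rintro l hl rfl
            exact hnT ⟨l, hl, by rw [Prod.mk.injEq]; exact ⟨rfl, by omega⟩⟩)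
          linarith
  · rintro _ ⟨l, hl, rfl⟩
    have hmono := aux_nseq_mono k hl
    rcases Nat.eq_zero_or_pos l with rfl | hlpos
    · refine ⟨_, hbV (n - 1) (by omega), Or.inr ?_⟩
      rw [hzero, Prod.mk.injEq]
      exact ⟨rfl, by omega⟩
    rcases Nat.lt_or_ge l s with hls | hls
    · have h1 : 0 < nseq k l := by
        have h1 := aux_nseq_mono k (show 1 ≤ l from hlpos)
        have h2 := aux_nseq_succ k 0
        have h3 := hk 0 (by omega)
        simp only [zero_add] at h2
        omega
      have h2 : nseq k l < n := by
        have h1 := aux_nseq_mono k (show l + 1 ≤ s from hls)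
        have h2 := aux_nseq_succ k l
        have h3 := hk l hls
        omega
      have hij : (nseq k l, n - nseq k l) ∈ GCIdx n := ⟨h1, by simp only; omega, by simp only; omega⟩
      obtain ⟨h3, h4⟩ := hbd x₀ (nseq k l) (n - nseq k l) (by omega)
      obtain ⟨u, hu⟩ := aux_incoming n lam F x₀ hx₀ _ _ hij (by
        rw [h3, h4]
        exact hlam.2 l hlpos hls)
      exact ⟨_, hu, Or.inr (by rw [hn])⟩
    · obtain rfl : l = s := by omega
      refine ⟨_, hbH (n - 1) (by omega), Or.inr ?_⟩
      rw [Prod.mk.injEq]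
      exact ⟨by omega, by omega⟩

/-- Corollary 2.4. For any face `F` of the Gelfand–Cetlin
polytope `P_λ`, the graph `φ(F)` is a face of the ladder diagram `Γ_k`. -/
theorem phiGC_isFace (s : ℕ) (hs : 1 ≤ s) (k : ℕ → ℕ) (hk : ∀ i < s, 0 < k i)
    (lam : ℕ → ℝ) (hlam : HasBlockStructure s k lam)
    (F : Set (GCIdx (nseq k s) → ℝ)) (hF : IsGCFace (nseq k s) lam F) :
    IsLadderFace s k (phiGC (nseq k s) lam F) := by
  exact aux_main s hs k hk lam hlam _ rfl F hF
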